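/- If q_σ is a spectral, submultiplicative norm on ℙ(ℂ^N), then for every integer k ≥ 1 one has the equality m_k(q_σ) = k·m(q_σ) in [0,∞]. -/

import Mathlib

open MvPolynomial Filter
open scoped ENNReal

/-- The partial-derivative operator `D^α = ∂^{|α|}/∂x₁^{α₁}⋯∂x_N^{α_N}` on
polynomials in `N` variables. -/
noncomputable def mvDeriv {N : ℕ} (α : Fin N → ℕ) (P : MvPolynomial (Fin N) ℂ) :
    MvPolynomial (Fin N) ℂ :=
  (List.ofFn fun j : Fin N =>
      (fun Q : MvPolynomial (Fin N) ℂ => MvPolynomial.pderiv j Q)^[α j]).foldl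
    (fun Q f => f Q) P

/-- `q` is a norm on the complex vector space `ℙ(ℂ^N)` of polynomials. -/
structure IsPolyNorm {N : ℕ} (q : MvPolynomial (Fin N) ℂ → ℝ) : Prop where
  nonneg : ∀ P, 0 ≤ q P
  definite : ∀ P, q P = 0 → P = 0
  triangle : ∀ P Q, q (P + Q) ≤ q P + q Q
  homog : ∀ (c : ℂ) (P), q (c • P) = ‖c‖ * q P

/-- The Markov exponent `m(α, q) ∈ [0,∞]`: the infimum of the set of `s > 0` such that
`q(D^α P) ≤ M (deg P)^s q(P)` holds for some `M > 0` and all `P` with `deg P ≥ 1`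
(`sInf ∅ = ∞` in `ℝ≥0∞`). -/
noncomputable def mExp {N : ℕ} (q : MvPolynomial (Fin N) ℂ → ℝ) (α : Fin N → ℕ) : ℝ≥0∞ :=
  sInf (ENNReal.ofReal '' {s : ℝ | 0 < s ∧ ∃ M : ℝ, 0 < M ∧
    ∀ P : MvPolynomial (Fin N) ℂ, 1 ≤ P.totalDegree →
      q (mvDeriv α P) ≤ M * (P.totalDegree : ℝ) ^ s * q P})

/-- `m_k(q) = max {m(α,q) : |α| = k}`. -/
noncomputable def mkExp {N : ℕ} (q : MvPolynomial (Fin N) ℂ → ℝ) (k : ℕ) : ℝ≥0∞ :=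
  ⨆ α ∈ {α : Fin N → ℕ | ∑ j, α j = k}, mExp q α

/-- The asymptotic Markov exponent `m*(q) = limsup_k m_k(q)/k`. -/
noncomputable def mStar {N : ℕ} (q : MvPolynomial (Fin N) ℂ → ℝ) : ℝ≥0∞ :=
  Filter.atTop.limsup fun k : ℕ => mkExp q k / (k : ℝ≥0∞)

/-!
The bound `m_k ≤ k · m` comes from composing `k` first-order Markov inequalities, as
differentiation does not raise the degree. Conversely, freezing `c = a` after differentiating
`(a - c) ^ k` in the direction `D` a total of `k` times gives
`k! (D a) ^ k = ∑ j ≤ k, (k choose j) (-a) ^ (k - j) D ^ k (a ^ j)`.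
A Markov inequality of exponent `s` for `D ^ k`, applied to the powers of `a`, bounds the right-hand
side by a constant times `(deg a) ^ s * q a ^ k`. Since `q` is spectral, taking `k`-th roots yields
a Markov inequality of exponent `s / k` for `D`.

The products in the sum are estimated by `q (a * b) ≤ q a * q b`: polarization gives this with an
extra factor `2`, which disappears on passing to high powers of `a` and `b`.
-/

theorem seminorm_nsmul {𝕜 E : Type*} [RCLike 𝕜] [AddCommGroup E] [Module 𝕜 E] (p : Seminorm 𝕜 E)
    (n : ℕ) (x : E) : p (n • x) = n * p x := by
  rw [← Nat.cast_smul_eq_nsmul 𝕜, map_smul_eq_mul, RCLike.norm_natCast]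

section PowMulSeminorm

variable {𝕜 A : Type*} [RCLike 𝕜] [CommRing A] [Algebra 𝕜 A] {p : Seminorm 𝕜 A}

theorem seminorm_mul_le_two_of_isPowMul (hp : IsPowMul p) {a b : A} (ha : p a ≤ 1)
    (hb : p b ≤ 1) : p (a * b) ≤ 2 := by
  have polarization : 4 • (a * b) = (a + b) ^ 2 - (a - b) ^ 2 := by ring
  have bound : 4 * p (a * b) ≤ 2 ^ 2 + 2 ^ 2 := calc
    4 * p (a * b) = p ((a + b) ^ 2 - (a - b) ^ 2) := by
      rw [← polarization, seminorm_nsmul, Nat.cast_ofNat]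
    _ ≤ p (a + b) ^ 2 + p (a - b) ^ 2 := by
      rw [← hp (a + b) one_le_two, ← hp (a - b) one_le_two]
      exact map_sub_le_add p _ _
    _ ≤ 2 ^ 2 + 2 ^ 2 := by
      gcongr
      · linarith [map_add_le_add p a b]
      · linarith [map_sub_le_add p a b]
  linarith

theorem seminorm_mul_le_two_mul_of_isPowMul (hp : IsPowMul p) {a b : A} {r s : ℝ} (hr : 0 < r)
    (hs : 0 < s) (ha : p a ≤ r) (hb : p b ≤ s) : p (a * b) ≤ 2 * (r * s) := by
  have normalize {x : A} {t : ℝ} (ht : 0 < t) (hx : p x ≤ t) : p ((t⁻¹ : 𝕜) • x) ≤ 1 := by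
    rw [map_smul_eq_mul, norm_inv, RCLike.norm_of_nonneg ht.le]
    exact inv_mul_le_one_of_le₀ hx ht.le
  have bound := seminorm_mul_le_two_of_isPowMul hp (normalize hr ha) (normalize hs hb)
  rw [smul_mul_smul_comm, ← mul_inv, map_smul_eq_mul, norm_inv, norm_mul,
    RCLike.norm_of_nonneg hr.le, RCLike.norm_of_nonneg hs.le] at bound
  rwa [inv_mul_le_iff₀ (by positivity), mul_comm _ (2 : ℝ)] at bound

theorem seminorm_mul_le_of_isPowMul (hp : IsPowMul p) (a b : A) : p (a * b) ≤ p a * p b := by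
  refine le_mul_of_forall_lt₀ fun r hr s hs => ?_
  have hr₀ : 0 < r := (apply_nonneg p a).trans_lt hr
  have hs₀ : 0 < s := (apply_nonneg p b).trans_lt hs
  by_contra! hlt
  obtain ⟨n, hn⟩ := pow_unbounded_of_one_lt 2 ((one_lt_div (by positivity)).2 hlt)
  have hn₁ : 1 ≤ n := by
    by_contra! h
    norm_num [Nat.lt_one_iff.1 h] at hn
  rw [div_pow, lt_div_iff₀ (by positivity), mul_pow, ← hp _ hn₁, mul_pow] at hn
  refine hn.not_ge (seminorm_mul_le_two_mul_of_isPowMul hp (by positivity) (by positivity) ?_ ?_)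
  · rw [hp _ hn₁]
    gcongr
  · rw [hp _ hn₁]
    gcongr

theorem seminorm_pow_le_of_isPowMul (hp : IsPowMul p) (a : A) (n : ℕ) : p (a ^ n) ≤ p a ^ n := by
  rcases n.eq_zero_or_pos with rfl | hn
  · simpa only [pow_zero] using hp.map_one_le_one
  · exact (hp a hn).le

end PowMulSeminorm

section Derivation

variable {R A : Type*} [CommRing R] [CommRing A] [Algebra R A] (D : Derivation R A A)

/-- The value at `c = a` of the `k`-th `D`-derivative of `(a - c) ^ n`, where `c` is treated as a
constant. The binomial expansion avoids adjoining an actual constant to `A`. -/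
def binomialDeriv (a : A) (n k : ℕ) : A :=
  ∑ j ∈ Finset.range (n + 1), n.choose j • ((-a) ^ (n - j) * D^[k] (a ^ j))

theorem binomialDeriv_zero_right {n : ℕ} (hn : n ≠ 0) (a : A) : binomialDeriv D a n 0 = 0 := by
  calc binomialDeriv D a n 0 = (a + -a) ^ n := by
        rw [add_pow, binomialDeriv]
        refine Finset.sum_congr rfl fun j _ => ?_
        simp only [Function.iterate_zero, id, nsmul_eq_mul]
        ring
    _ = 0 := by rw [add_neg_cancel, zero_pow hn]

-- The last term corrects for `D` also acting on the frozen coefficients `(-a) ^ (n + 1 - j)`.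
theorem binomialDeriv_succ_succ (a : A) (n k : ℕ) :
    binomialDeriv D a (n + 1) (k + 1) =
      D (binomialDeriv D a (n + 1) k) + (n + 1) • (D a * binomialDeriv D a n k) := by
  have correction : (n + 1) • (D a * binomialDeriv D a n k) =
      ∑ j ∈ Finset.range (n + 1 + 1), ((n + 1).choose j * (n + 1 - j)) •
        ((-a) ^ (n + 1 - j - 1) * D a * D^[k] (a ^ j)) := by
    rw [Finset.sum_range_succ, Nat.sub_self, Nat.mul_zero, zero_smul, add_zero, binomialDeriv,
      Finset.mul_sum, Finset.smul_sum]
    refine Finset.sum_congr rfl fun j _ => ?_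
    rw [← Nat.choose_mul_succ_eq, Nat.sub_right_comm, Nat.add_sub_cancel]
    simp only [nsmul_eq_mul]
    push_cast
    ring
  rw [correction, binomialDeriv, binomialDeriv, map_sum, ← Finset.sum_add_distrib]
  refine Finset.sum_congr rfl fun j _ => ?_
  rw [Function.iterate_succ_apply', map_nsmul, D.leibniz, D.leibniz_pow, map_neg]
  simp only [nsmul_eq_mul, smul_eq_mul]
  push_cast
  ring

theorem binomialDeriv_of_lt (a : A) {n k : ℕ} (hkn : k < n) : binomialDeriv D a n k = 0 := by
  induction k generalizing n with
  | zero => exact binomialDeriv_zero_right D hkn.ne' a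
  | succ k ih =>
    obtain _ | n := n
    · exact absurd hkn (Nat.not_lt_zero _)
    · rw [binomialDeriv_succ_succ, ih (by omega), ih (by omega), map_zero, mul_zero, smul_zero,
        add_zero]

theorem binomialDeriv_self (a : A) (k : ℕ) : binomialDeriv D a k k = k.factorial • D a ^ k := by
  induction k with
  | zero => simp [binomialDeriv]
  | succ k ih =>
    rw [binomialDeriv_succ_succ, binomialDeriv_of_lt D a k.lt_succ_self, ih, map_zero, zero_add,
      mul_smul_comm, smul_smul, ← pow_succ', ← Nat.factorial_succ]

end Derivation

theorem seminorm_derivation_pow_le {𝕜 A : Type*} [RCLike 𝕜] [CommRing A] [Algebra 𝕜 A]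
    {p : Seminorm 𝕜 A} (hp : IsPowMul p) (D : Derivation 𝕜 A A) (a : A) {k : ℕ} (hk : k ≠ 0)
    {C : ℝ} (hC : ∀ j ≤ k, p (D^[k] (a ^ j)) ≤ C * p a ^ j) :
    p (D a) ^ k ≤ C * (2 * p a) ^ k := by
  have term_le : ∀ j ∈ Finset.range (k + 1),
      p (k.choose j • ((-a) ^ (k - j) * D^[k] (a ^ j))) ≤
        C * (p a ^ j * p a ^ (k - j) * k.choose j) := fun j hj => calc
    _ = k.choose j * p ((-a) ^ (k - j) * D^[k] (a ^ j)) := seminorm_nsmul p _ _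
    _ ≤ k.choose j * (p ((-a) ^ (k - j)) * p (D^[k] (a ^ j))) := by
      gcongr
      exact seminorm_mul_le_of_isPowMul hp _ _
    _ ≤ k.choose j * (p (-a) ^ (k - j) * (C * p a ^ j)) := by
      gcongr
      · exact seminorm_pow_le_of_isPowMul hp _ _
      · exact hC j (Finset.mem_range_succ_iff.1 hj)
    _ = C * (p a ^ j * p a ^ (k - j) * k.choose j) := by
      rw [map_neg_eq_map]
      ring
  calc p (D a) ^ k = p (D a ^ k) := (hp _ (Nat.one_le_iff_ne_zero.2 hk)).symm
    _ ≤ k.factorial * p (D a ^ k) :=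
      le_mul_of_one_le_left (apply_nonneg p _) (Nat.one_le_cast.2 k.factorial_pos)
    _ = p (binomialDeriv D a k k) := by rw [binomialDeriv_self, seminorm_nsmul]
    _ ≤ ∑ j ∈ Finset.range (k + 1), C * (p a ^ j * p a ^ (k - j) * k.choose j) :=
      (Finset.le_sum_of_subadditive p (map_zero p).le (map_add_le_add p) _ _).trans
        (Finset.sum_le_sum term_le)
    _ = C * (2 * p a) ^ k := by rw [← Finset.mul_sum, ← add_pow, two_mul]

section PartialDerivatives

variable {σ R : Type*}

theorem commute_pderiv [CommRing R] (i j : σ) :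
    Function.Commute (pderiv (R := R) i) (pderiv (R := R) j) := fun P => by
  classical
  have bracket : ⁅pderiv (R := R) i, pderiv j⁆ = 0 := derivation_ext fun l => by
    rw [Derivation.commutator_apply, pderiv_X, pderiv_X]
    simp [Pi.single_apply, apply_ite]
  rw [← sub_eq_zero, ← Derivation.commutator_apply, bracket, Derivation.zero_apply]

theorem totalDegree_pderiv_le [CommSemiring R] (i : σ) (P : MvPolynomial σ R) :
    (pderiv i P).totalDegree ≤ P.totalDegree := by
  refine Finset.sup_le fun m hm => ?_
  have hm' : m + Finsupp.single i 1 ∈ P.support := by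
    rw [mem_support_iff, coeff_pderiv] at hm
    exact mem_support_iff.2 (left_ne_zero_of_mul hm)
  exact (Finsupp.degree_mono le_self_add).trans (le_totalDegree hm')

end PartialDerivatives

theorem foldl_iterate_add_single {ι X : Type*} [DecidableEq ι] {f : ι → X → X}
    (hf : ∀ i j, Function.Commute (f i) (f j)) (α : ι → ℕ) {i : ι} {l : List ι} (hl : l.Nodup)
    (hi : i ∈ l) (x : X) :
    l.foldl (fun y j => (f j)^[(α + Pi.single i 1 : ι → ℕ) j] y) x =
      f i (l.foldl (fun y j => (f j)^[α j] y) x) := by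
  induction l generalizing x with
  | nil => exact absurd hi List.not_mem_nil
  | cons b l ih =>
    obtain ⟨hb, hl⟩ := List.nodup_cons.1 hl
    rw [List.foldl_cons, List.foldl_cons]
    obtain rfl | hil := List.mem_cons.1 hi
    · rw [Pi.add_apply, Pi.single_eq_same, Function.iterate_succ_apply',
        ← List.foldl_hom (f i) (g₂ := fun y j => (f j)^[α j] y)
          fun y j => ((hf i j).iterate_right (α j) y).symm]
      refine List.foldl_ext _ _ _ fun y j hj => ?_
      rw [Pi.add_apply, Pi.single_eq_of_ne (ne_of_mem_of_not_mem hj hb), add_zero]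
    · rw [ih hl hil, Pi.add_apply, Pi.single_eq_of_ne (ne_of_mem_of_not_mem hil hb).symm, add_zero]

theorem exists_eq_add_single {ι : Type*} [DecidableEq ι] {α : ι → ℕ} (hα : α ≠ 0) :
    ∃ (β : ι → ℕ) (i : ι), α = β + Pi.single i 1 := by
  obtain ⟨i, hi⟩ := Function.ne_iff.1 hα
  refine ⟨α - Pi.single i 1, i, (tsub_add_cancel_of_le ?_).symm⟩
  exact update_le_iff.2 ⟨Nat.one_le_iff_ne_zero.2 hi, fun j _ => Nat.zero_le (α j)⟩

theorem multiIndex_induction {ι : Type*} [Finite ι] [DecidableEq ι] {motive : (ι → ℕ) → Prop}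
    (zero : motive 0) (add_single : ∀ α i, motive α → motive (α + Pi.single i 1)) (α : ι → ℕ) :
    motive α := by
  have := Fintype.ofFinite ι
  induction hn : ∑ j, α j generalizing α with
  | zero =>
    rwa [show α = 0 from funext fun j => Finset.sum_eq_zero_iff.1 hn j (Finset.mem_univ j)]
  | succ n ih =>
    obtain ⟨β, i, rfl⟩ := exists_eq_add_single (α := α) (by rintro rfl; simp at hn)
    refine add_single β i (ih β ?_)
    simpa [Finset.sum_add_distrib] using hn

section MvDeriv

variable {N : ℕ}

theorem mvDeriv_eq_foldl_finRange (α : Fin N → ℕ) (P : MvPolynomial (Fin N) ℂ) :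
    mvDeriv α P = (List.finRange N).foldl (fun Q j => (pderiv j)^[α j] Q) P := by
  rw [mvDeriv, List.ofFn_eq_map, List.foldl_map]

theorem mvDeriv_zero (P : MvPolynomial (Fin N) ℂ) : mvDeriv 0 P = P := by
  rw [mvDeriv_eq_foldl_finRange]
  exact List.foldl_fixed' (fun _ => rfl) _

theorem mvDeriv_add_single (α : Fin N → ℕ) (i : Fin N) (P : MvPolynomial (Fin N) ℂ) :
    mvDeriv (α + Pi.single i 1) P = pderiv i (mvDeriv α P) := by
  simp only [mvDeriv_eq_foldl_finRange]
  exact foldl_iterate_add_single commute_pderiv α (List.nodup_finRange N) (List.mem_finRange i) P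

theorem mvDeriv_single (i : Fin N) (k : ℕ) (P : MvPolynomial (Fin N) ℂ) :
    mvDeriv (Pi.single i k) P = (pderiv i)^[k] P := by
  induction k with
  | zero => rw [Pi.single_zero, mvDeriv_zero, Function.iterate_zero, id]
  | succ k ih => rw [Pi.single_add, mvDeriv_add_single, ih, Function.iterate_succ_apply']

theorem totalDegree_mvDeriv_le (α : Fin N → ℕ) (P : MvPolynomial (Fin N) ℂ) :
    (mvDeriv α P).totalDegree ≤ P.totalDegree := by
  induction α using multiIndex_induction with
  | zero => rw [mvDeriv_zero]
  | add_single α i ih =>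
    rw [mvDeriv_add_single]
    exact (totalDegree_pderiv_le i _).trans ih

theorem mvDeriv_eq_zero_of_totalDegree_eq_zero {α : Fin N → ℕ} (hα : α ≠ 0)
    {P : MvPolynomial (Fin N) ℂ} (hP : P.totalDegree = 0) : mvDeriv α P = 0 := by
  obtain ⟨β, i, rfl⟩ := exists_eq_add_single hα
  have hβ : (mvDeriv β P).totalDegree = 0 :=
    Nat.eq_zero_of_le_zero (hP ▸ totalDegree_mvDeriv_le β P)
  rw [mvDeriv_add_single, totalDegree_eq_zero_iff_eq_C.1 hβ, pderiv_C]

end MvDeriv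

/-- The Markov inequality of exponent `s` for `D^α`: for some constant `M`, every nonconstant `P`
satisfies `q (D^α P) ≤ M (deg P)^s q(P)`. The Markov exponent `mExp q α` is the infimum of the
positive such `s`. -/
def HasMarkovBound {N : ℕ} (q : MvPolynomial (Fin N) ℂ → ℝ) (α : Fin N → ℕ) (s : ℝ) : Prop :=
  ∃ M : ℝ, 0 < M ∧ ∀ P : MvPolynomial (Fin N) ℂ, 1 ≤ P.totalDegree →
    q (mvDeriv α P) ≤ M * (P.totalDegree : ℝ) ^ s * q P

namespace HasMarkovBound

variable {N : ℕ} {q : Seminorm ℂ (MvPolynomial (Fin N) ℂ)} {α : Fin N → ℕ} {s t : ℝ}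

theorem mono (h : HasMarkovBound q α s) (hst : s ≤ t) : HasMarkovBound q α t := by
  obtain ⟨M, hM, bound⟩ := h
  refine ⟨M, hM, fun P hP => (bound P hP).trans ?_⟩
  have hdeg : (1 : ℝ) ≤ P.totalDegree := Nat.one_le_cast.2 hP
  gcongr

theorem exists_le_of_totalDegree_le (h : HasMarkovBound q α s) (hα : α ≠ 0) (hs : 0 ≤ s) :
    ∃ M : ℝ, 0 < M ∧ ∀ (d : ℕ) (P : MvPolynomial (Fin N) ℂ), P.totalDegree ≤ d →
      q (mvDeriv α P) ≤ M * (d : ℝ) ^ s * q P := by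
  obtain ⟨M, hM, bound⟩ := h
  refine ⟨M, hM, fun d P hPd => ?_⟩
  rcases P.totalDegree.eq_zero_or_pos with hP | hP
  · rw [mvDeriv_eq_zero_of_totalDegree_eq_zero hα hP, map_zero]
    positivity
  · refine (bound P hP).trans ?_
    gcongr

theorem zero : HasMarkovBound q 0 0 :=
  ⟨1, one_pos, fun P _ => by rw [mvDeriv_zero, Real.rpow_zero, one_mul, one_mul]⟩

theorem add_single (h : HasMarkovBound q α t) {i : Fin N}
    (hi : HasMarkovBound q (Pi.single i 1) s) (hs : 0 ≤ s) :
    HasMarkovBound q (α + Pi.single i 1) (t + s) := by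
  obtain ⟨M, hM, bound⟩ := h
  obtain ⟨K, hK, bound_i⟩ := hi.exists_le_of_totalDegree_le (by simp) hs
  refine ⟨K * M, by positivity, fun P hP => ?_⟩
  have hdeg : (0 : ℝ) < P.totalDegree := Nat.cast_pos.2 hP
  calc q (mvDeriv (α + Pi.single i 1) P)
      = q (mvDeriv (Pi.single i 1) (mvDeriv α P)) := by
        rw [mvDeriv_add_single, mvDeriv_single, Function.iterate_one]
    _ ≤ K * (P.totalDegree : ℝ) ^ s * q (mvDeriv α P) :=
        bound_i _ _ (totalDegree_mvDeriv_le α P)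
    _ ≤ K * (P.totalDegree : ℝ) ^ s * (M * (P.totalDegree : ℝ) ^ t * q P) := by
        gcongr
        exact bound P hP
    _ = K * M * (P.totalDegree : ℝ) ^ (t + s) * q P := by
        rw [Real.rpow_add hdeg]
        ring

theorem of_forall_single (hs : 0 ≤ s) (h : ∀ i, HasMarkovBound q (Pi.single i 1) s)
    (α : Fin N → ℕ) : HasMarkovBound q α ((∑ j, α j : ℕ) * s) := by
  induction α using multiIndex_induction with
  | zero => simpa using zero
  | add_single α i ih =>
    have hsum : ((∑ j, (α + Pi.single i 1 : Fin N → ℕ) j : ℕ) : ℝ) * s =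
        (∑ j, α j : ℕ) * s + s := by
      simp [Finset.sum_add_distrib, add_mul]
    exact hsum ▸ ih.add_single (h i) hs

theorem single_one_of_single (hq : IsPowMul q) {i : Fin N} {k : ℕ} (hk : k ≠ 0) (hs : 0 ≤ s)
    (h : HasMarkovBound q (Pi.single i k) s) : HasMarkovBound q (Pi.single i 1) (s / k) := by
  obtain ⟨M, hM, bound⟩ := h.exists_le_of_totalDegree_le (by simpa using hk) hs
  set C : ℝ := M * (k : ℝ) ^ s with hC
  have hC₀ : 0 < C := by positivity
  have rpow_div_pow (x : ℝ) (hx : 0 ≤ x) (u : ℝ) : (x ^ (u / k)) ^ k = x ^ u := by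
    rw [← Real.rpow_mul_natCast hx, div_mul_cancel₀ _ (Nat.cast_ne_zero.2 hk)]
  refine ⟨C ^ ((1 : ℝ) / k) * 2, by positivity, fun P _ => ?_⟩
  set d := P.totalDegree
  rw [mvDeriv_single, Function.iterate_one]
  refine le_of_pow_le_pow_left₀ hk (by positivity) ?_
  calc q (pderiv i P) ^ k ≤ C * (d : ℝ) ^ s * (2 * q P) ^ k := by
        refine seminorm_derivation_pow_le hq (pderiv i) P hk fun j hj => ?_
        have hdeg : (P ^ j).totalDegree ≤ k * d :=
          (totalDegree_pow P j).trans (Nat.mul_le_mul_right d hj)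
        calc q ((pderiv i)^[k] (P ^ j)) ≤ M * ((k * d : ℕ) : ℝ) ^ s * q (P ^ j) := by
              simpa only [mvDeriv_single] using bound (k * d) (P ^ j) hdeg
          _ ≤ C * (d : ℝ) ^ s * q P ^ j := by
              rw [Nat.cast_mul, Real.mul_rpow (by positivity) (by positivity), ← mul_assoc, ← hC]
              gcongr
              exact seminorm_pow_le_of_isPowMul hq P j
    _ = (C ^ ((1 : ℝ) / k) * 2 * (d : ℝ) ^ (s / k) * q P) ^ k := by
        simp only [mul_pow, rpow_div_pow _ hC₀.le, rpow_div_pow _ d.cast_nonneg, Real.rpow_one]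
        ring

end HasMarkovBound

section MarkovExponent

variable {N : ℕ}

theorem mExp_le_mkExp (q : MvPolynomial (Fin N) ℂ → ℝ) {α : Fin N → ℕ} {k : ℕ}
    (hα : ∑ j, α j = k) : mExp q α ≤ mkExp q k :=
  le_iSup₂ (f := fun α (_ : α ∈ {α : Fin N → ℕ | ∑ j, α j = k}) => mExp q α) α hα

theorem mExp_le_ofReal {q : MvPolynomial (Fin N) ℂ → ℝ} {α : Fin N → ℕ} {s : ℝ} (hs : 0 < s)
    (h : HasMarkovBound q α s) : mExp q α ≤ ENNReal.ofReal s :=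
  sInf_le ⟨s, ⟨hs, h⟩, rfl⟩

variable {q : Seminorm ℂ (MvPolynomial (Fin N) ℂ)}

theorem hasMarkovBound_of_mExp_lt {α : Fin N → ℕ} {s : ℝ} (h : mExp q α < ENNReal.ofReal s) :
    HasMarkovBound q α s := by
  obtain ⟨_, ⟨t, ⟨_, bound⟩, rfl⟩, hts⟩ := sInf_lt_iff.1 h
  exact HasMarkovBound.mono bound (ENNReal.ofReal_lt_ofReal_iff'.1 hts).1.le

theorem mkExp_le_mul_mkExp_one (q : Seminorm ℂ (MvPolynomial (Fin N) ℂ)) {k : ℕ} (hk : k ≠ 0) :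
    mkExp q k ≤ k * mkExp q 1 := by
  have hk₀ : (k : ℝ≥0∞) ≠ 0 := Nat.cast_ne_zero.2 hk
  rw [← ENNReal.div_le_iff' hk₀ (ENNReal.natCast_ne_top k)]
  refine le_of_forall_gt_imp_ge_of_dense fun c hc => ?_
  rw [ENNReal.div_le_iff' hk₀ (ENNReal.natCast_ne_top k)]
  obtain rfl | hc_top := eq_or_ne c ⊤
  · rw [ENNReal.mul_top hk₀]
    exact le_top
  obtain ⟨s, hs, rfl⟩ : ∃ s : ℝ, 0 < s ∧ ENNReal.ofReal s = c :=
    ⟨c.toReal, ENNReal.toReal_pos (ne_bot_of_gt hc) hc_top, ENNReal.ofReal_toReal hc_top⟩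
  have first_order (i : Fin N) : HasMarkovBound q (Pi.single i 1) s :=
    hasMarkovBound_of_mExp_lt ((mExp_le_mkExp q (by simp)).trans_lt hc)
  refine iSup₂_le fun α (hα : ∑ j, α j = k) => ?_
  rw [← ENNReal.ofReal_natCast, ← ENNReal.ofReal_mul (Nat.cast_nonneg k)]
  exact mExp_le_ofReal (by positivity) (hα ▸ HasMarkovBound.of_forall_single hs.le first_order α)

theorem mul_mExp_single_one_le (hq : IsPowMul q) {k : ℕ} (hk : k ≠ 0) (i : Fin N) :
    k * mExp q (Pi.single i 1) ≤ mExp q (Pi.single i k) := by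
  refine le_sInf ?_
  rintro _ ⟨s, ⟨hs, bound⟩, rfl⟩
  have hk₀ : (0 : ℝ) < k := Nat.cast_pos.2 (Nat.pos_of_ne_zero hk)
  calc k * mExp q (Pi.single i 1) ≤ k * ENNReal.ofReal (s / k) := by
        gcongr
        exact mExp_le_ofReal (by positivity) (.single_one_of_single hq hk hs.le bound)
    _ = ENNReal.ofReal s := by
        rw [← ENNReal.ofReal_natCast, ← ENNReal.ofReal_mul hk₀.le, mul_div_cancel₀ _ hk₀.ne']

theorem mul_mkExp_one_le (hq : IsPowMul q) {k : ℕ} (hk : k ≠ 0) :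
    k * mkExp q 1 ≤ mkExp q k := by
  simp only [mkExp, ENNReal.mul_iSup]
  refine iSup₂_le fun α (hα : ∑ j, α j = 1) => ?_
  obtain ⟨β, i, rfl⟩ := exists_eq_add_single (α := α) (by rintro rfl; simp at hα)
  have hβ : β = 0 := funext <| by simpa [Finset.sum_add_distrib] using hα
  rw [hβ, zero_add]
  exact (mul_mExp_single_one_le hq hk i).trans (mExp_le_mkExp q (by simp))

end MarkovExponent

theorem statement2_general {N : ℕ} (q : Seminorm ℂ (MvPolynomial (Fin N) ℂ)) (hq : IsPowMul q)
    {k : ℕ} (hk : k ≠ 0) : mkExp q k = k * mkExp q 1 :=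
  (mkExp_le_mul_mkExp_one q hk).antisymm (mul_mkExp_one_le hq hk)

/-- If `q_σ` is a spectral, submultiplicative norm on `ℙ(ℂ^N)`, then for
every integer `k ≥ 1` one has `m_k(q_σ) = k · m(q_σ)` in `[0,∞]`. -/
theorem statement2 {N : ℕ} (qσ : MvPolynomial (Fin N) ℂ → ℝ) (hqσ : IsPolyNorm qσ)
    (hspec : ∀ (P : MvPolynomial (Fin N) ℂ) (n : ℕ), 1 ≤ n → qσ (P ^ n) = qσ P ^ n)
    (hsub : ∀ P Q : MvPolynomial (Fin N) ℂ, qσ (P * Q) ≤ qσ P * qσ Q)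
    (k : ℕ) (hk : 1 ≤ k) :
    mkExp qσ k = (k : ℝ≥0∞) * mkExp qσ 1 :=
  statement2_general (Seminorm.of qσ hqσ.triangle hqσ.homog) hspec (Nat.one_le_iff_ne_zero.mp hk)
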